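/- C₁* < 1.3155; that is, there exists g ∈ A₁, not identically zero, with g(0) > 0 and ρ₁*(g)/g(0) < 1.3155. -/

import Mathlib

open MeasureTheory Filter
open scoped Classical

noncomputable section

/-- The Fourier transform `ĝ(α) = ∫ g(x) e^{-2πiαx} dx` of a real-valued function. -/
def fourierT (g : ℝ → ℝ) (α : ℝ) : ℂ :=
  ∫ x : ℝ, (g x : ℂ) * Complex.exp (-(2 * Real.pi * α * x : ℝ) * Complex.I)

/-- The class `A₁` of continuous, even, non-negative functions `g ∈ L¹(ℝ)`
with `ĝ(α) ≤ 0` for `|α| ≥ 1` (such `ĝ` is real-valued since `g` is even and real). -/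
def memA1 (g : ℝ → ℝ) : Prop :=
  Continuous g ∧ (∀ x, g (-x) = g x) ∧ (∀ x, 0 ≤ g x) ∧ MeasureTheory.Integrable g ∧
    ∀ α : ℝ, 1 ≤ |α| → (fourierT g α).re ≤ 0

/-- The functional `ρ₁(g) = ĝ(0) + ∫_{-1}^{1} ĝ(α)|α| dα`. -/
def rho1 (g : ℝ → ℝ) : ℝ :=
  (fourierT g 0).re + ∫ α in (-1 : ℝ)..1, (fourierT g α).re * |α|

/-- The constant `C₁ = inf ρ₁(g)/g(0)` over nonzero `g ∈ A₁` with `g(0) > 0`. -/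
def C1 : ℝ :=
  sInf {c : ℝ | ∃ g : ℝ → ℝ, memA1 g ∧ g ≠ 0 ∧ 0 < g 0 ∧ c = rho1 g / g 0}

/-- The functional `ρ₁*(g) = ĝ(0) + ∫_{-1}^{1} ĝ(α)|α| dα + ∫_{1≤|α|≤3/2} ĝ(α)(3/2-|α|) dα`. -/
def rho1star (g : ℝ → ℝ) : ℝ :=
  (fourierT g 0).re + (∫ α in (-1 : ℝ)..1, (fourierT g α).re * |α|) +
    ∫ α in {α : ℝ | 1 ≤ |α| ∧ |α| ≤ 3 / 2}, (fourierT g α).re * (3 / 2 - |α|)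

/-- The constant `C₁* = inf ρ₁*(g)/g(0)` over nonzero `g ∈ A₁` with `g(0) > 0`. -/
def C1star : ℝ :=
  sInf {c : ℝ | ∃ g : ℝ → ℝ, memA1 g ∧ g ≠ 0 ∧ 0 < g 0 ∧ c = rho1star g / g 0}

/-!
Take `g(x) = sinc²(πx/T) |∑ a_j e(jx/T)|²` with `e(y) = exp(2πiy)`. It is nonnegative, and `ĝ(α)` is
`T` times the value at `Tα` of the piecewise linear function with nodes in `ℤ` that interpolates the
autocorrelation `c_n = ∑ a_l a_{l+n}`. Hence `g ∈ A₁` as soon as `c_n ≤ 0` for all `n ≥ T`, and for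
even `T` the value `ρ₁*(g)` is an explicit rational combination of the `c_n`, so that integer
coefficients `a_j` reduce the bound to a finite computation with integers.

That `C₁*` is at most the ratio attained by `g` requires the ratios to be bounded below, since
`sInf` of an unbounded set is `0`. Integrating `3 + 4 cos θ + 2 cos 2θ = (1 + 2 cos θ)² ≥ 0` with
`θ = 2παx` against an arbitrary `g ∈ A₁` gives `ĝ(α) ≥ -(3/4) ĝ(0)` wherever `ĝ(2α) ≤ 0`, and this
yields `ρ₁* ≥ 0` on `A₁`.
-/

lemma const_mul_integral_le_integral_mul {f w : ℝ → ℝ} {a b c : ℝ} (hab : a ≤ b)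
    (hf : Continuous f) (hw : Continuous w) (hcf : ∀ x ∈ Set.Icc a b, c ≤ f x)
    (hw_nonneg : ∀ x ∈ Set.Icc a b, 0 ≤ w x) :
    c * ∫ x in a..b, w x ≤ ∫ x in a..b, f x * w x := by
  rw [← intervalIntegral.integral_const_mul]
  exact intervalIntegral.integral_mono_on hab
    (Continuous.intervalIntegrable (by fun_prop) _ _)
    (Continuous.intervalIntegrable (by fun_prop) _ _)
    fun x hx => mul_le_mul_of_nonneg_right (hcf x hx) (hw_nonneg x hx)

lemma measurableSet_le_abs_le (a b : ℝ) : MeasurableSet {x : ℝ | a ≤ |x| ∧ |x| ≤ b} :=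
  (measurableSet_le measurable_const measurable_norm).inter
    (measurableSet_le measurable_norm measurable_const)

lemma setIntegral_comp_abs (F : ℝ → ℝ) {a b : ℝ} (ha : 0 ≤ a) (hab : a ≤ b) :
    ∫ x in {x | a ≤ |x| ∧ |x| ≤ b}, F |x| = 2 * ∫ x in a..b, F x := by
  calc ∫ x in {x | a ≤ |x| ∧ |x| ≤ b}, F |x|
      = ∫ x, (Set.Icc a b).indicator F |x| := by
        rw [← integral_indicator (measurableSet_le_abs_le a b)]
        rfl
    _ = 2 * ∫ x in Set.Ioi 0, (Set.Icc a b).indicator F x := integral_comp_abs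
    _ = 2 * ∫ x in a..b, F x := by
        have hsub : Set.Icc a b ⊆ Set.Ici 0 := fun x hx => ha.trans hx.1
        rw [← integral_Ici_eq_integral_Ioi, setIntegral_indicator measurableSet_Icc,
          Set.inter_eq_right.mpr hsub, integral_Icc_eq_integral_Ioc,
          intervalIntegral.integral_of_le hab]

section FourierTransform

open scoped FourierTransform ComplexConjugate

variable {g : ℝ → ℝ}

lemma fourierT_eq_fourier (g : ℝ → ℝ) : fourierT g = 𝓕 fun x => (g x : ℂ) := by
  ext α
  rw [Real.fourier_real_eq_integral_exp_smul, fourierT]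
  congr! 2 with x
  rw [smul_eq_mul, mul_comm]
  congr 3
  push_cast
  ring

lemma continuous_fourierT (hg : Integrable g) : Continuous (fourierT g) := by
  rw [fourierT_eq_fourier]
  exact VectorFourier.fourierIntegral_continuous Real.continuous_fourierChar
    (innerSL ℝ).continuous₂ hg.ofReal

lemma fourierT_neg (g : ℝ → ℝ) (α : ℝ) : fourierT g (-α) = conj (fourierT g α) := by
  rw [fourierT, fourierT, ← integral_conj]
  congr! 2
  simp only [map_mul, map_neg, Complex.conj_ofReal, ← Complex.exp_conj, Complex.conj_I]
  congr 2
  push_cast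
  ring

lemma fourierT_re_neg (g : ℝ → ℝ) (α : ℝ) : (fourierT g (-α)).re = (fourierT g α).re := by
  rw [fourierT_neg, Complex.conj_re]

lemma fourierT_re_abs (g : ℝ → ℝ) (α : ℝ) : (fourierT g |α|).re = (fourierT g α).re := by
  rcases abs_choice α with h | h <;> rw [h]
  exact fourierT_re_neg g α

lemma fourierT_neg_of_even (hg : ∀ x, g (-x) = g x) (α : ℝ) :
    fourierT g (-α) = fourierT g α := by
  rw [fourierT, fourierT, ← integral_neg_eq_self]
  congr! 2 with x
  simp only [hg, mul_neg, neg_mul, neg_neg]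

lemma ofReal_fourierT_re_of_even (hg : ∀ x, g (-x) = g x) (α : ℝ) :
    ((fourierT g α).re : ℂ) = fourierT g α :=
  Complex.conj_eq_iff_re.mp ((fourierT_neg g α).symm.trans (fourierT_neg_of_even hg α))

lemma integrable_mul_cos (hg : Integrable g) (c : ℝ) :
    Integrable fun x => g x * Real.cos (c * x) :=
  hg.mul_bdd (c := 1) (by fun_prop) (Eventually.of_forall fun x => Real.abs_cos_le_one _)

lemma fourierT_re (hg : Integrable g) (α : ℝ) :
    (fourierT g α).re = ∫ x, g x * Real.cos (2 * Real.pi * α * x) := by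
  have hint : Integrable fun x : ℝ =>
      (g x : ℂ) * Complex.exp (-(2 * Real.pi * α * x : ℝ) * Complex.I) :=
    hg.ofReal.mul_bdd (c := 1) (by fun_prop) (Eventually.of_forall fun x => by
      rw [← Complex.ofReal_neg, Complex.norm_exp_ofReal_mul_I])
  rw [fourierT, ← RCLike.re_eq_complex_re, ← integral_re hint]
  congr! 2 with x
  rw [RCLike.re_eq_complex_re, Complex.re_ofReal_mul, ← Complex.ofReal_neg,
    Complex.exp_ofReal_mul_I_re, Real.cos_neg]

lemma fourierT_re_mul_cos (hg : Integrable g) (μ α : ℝ) :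
    (fourierT (fun x => g x * Real.cos (2 * Real.pi * μ * x)) α).re =
      ((fourierT g (α - μ)).re + (fourierT g (α + μ)).re) / 2 := by
  rw [fourierT_re (integrable_mul_cos hg _), fourierT_re hg, fourierT_re hg,
    ← integral_add (integrable_mul_cos hg _) (integrable_mul_cos hg _), ← integral_div]
  congr! 2
  rw [mul_sub, mul_add, sub_mul, add_mul, Real.cos_sub, Real.cos_add]
  ring

lemma fourierT_comp_div (g : ℝ → ℝ) {T : ℝ} (hT : 0 < T) (α : ℝ) :
    fourierT (fun x => g (x / T)) α = T * fourierT g (T * α) := by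
  rw [fourierT, fourierT, ← Complex.real_smul]
  nth_rw 2 [← abs_of_pos hT]
  rw [← Measure.integral_comp_div]
  congr! 7 with x
  field_simp

lemma fourierT_finset_sum_const_mul {ι : Type*} (s : Finset ι) (c : ι → ℝ) {g : ι → ℝ → ℝ}
    (hg : ∀ i ∈ s, Integrable (g i)) (α : ℝ) :
    (fourierT (fun x => ∑ i ∈ s, c i * g i x) α).re = ∑ i ∈ s, c i * (fourierT (g i) α).re := by
  rw [fourierT_re (integrable_finsetSum _ fun i hi => (hg i hi).const_mul _)]
  simp only [Finset.sum_mul, mul_assoc (c _)]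
  rw [integral_finsetSum _ fun i hi => (integrable_mul_cos (hg i hi) _).const_mul _]
  refine Finset.sum_congr rfl fun i hi => ?_
  rw [integral_const_mul, fourierT_re (hg i hi)]

end FourierTransform

section LowerBound

variable {g : ℝ → ℝ}

lemma rho1star_eq_intervalIntegral (g : ℝ → ℝ) :
    rho1star g = (fourierT g 0).re + 2 * (∫ α in (0 : ℝ)..1, (fourierT g α).re * α) +
      2 * ∫ α in (1 : ℝ)..(3 / 2), (fourierT g α).re * (3 / 2 - α) := by
  have hinner : ∫ α in (-1 : ℝ)..1, (fourierT g α).re * |α| =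
      ∫ α in {α : ℝ | 0 ≤ |α| ∧ |α| ≤ 1}, (fourierT g |α|).re * |α| := by
    rw [intervalIntegral.integral_of_le (by norm_num), ← integral_Icc_eq_integral_Ioc]
    simp only [fourierT_re_abs, abs_nonneg, true_and, abs_le]
    rfl
  have houter := setIntegral_comp_abs (fun α => (fourierT g α).re * (3 / 2 - α)) zero_le_one
    (by norm_num : (1 : ℝ) ≤ 3 / 2)
  simp only [fourierT_re_abs] at houter
  rw [rho1star, hinner, houter,
    setIntegral_comp_abs (fun α => (fourierT g α).re * α) le_rfl zero_le_one]

lemma neg_fourierT_re_zero_le (hg : Integrable g) (hg_nonneg : ∀ x, 0 ≤ g x) (α : ℝ) :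
    -(fourierT g 0).re ≤ (fourierT g α).re := by
  rw [fourierT_re hg, fourierT_re hg, ← integral_neg]
  refine integral_mono (integrable_mul_cos hg _).neg (integrable_mul_cos hg _) fun x => ?_
  simp only [mul_zero, zero_mul, Real.cos_zero]
  nlinarith [hg_nonneg x, Real.neg_one_le_cos (2 * Real.pi * α * x)]

lemma fourierT_re_double_angle_nonneg (hg : Integrable g) (hg_nonneg : ∀ x, 0 ≤ g x) (α : ℝ) :
    0 ≤ 3 * (fourierT g 0).re + 4 * (fourierT g α).re + 2 * (fourierT g (2 * α)).re := by
  have hcos (c β : ℝ) := (integrable_mul_cos hg (2 * Real.pi * β)).const_mul c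
  have hsum : Integrable fun x => 3 * (g x * Real.cos (2 * Real.pi * 0 * x)) +
      4 * (g x * Real.cos (2 * Real.pi * α * x)) := (hcos 3 0).add (hcos 4 α)
  calc 0 ≤ ∫ x, g x * (1 + 2 * Real.cos (2 * Real.pi * α * x)) ^ 2 :=
        integral_nonneg fun x => mul_nonneg (hg_nonneg x) (sq_nonneg _)
    _ = ∫ x, (3 * (g x * Real.cos (2 * Real.pi * 0 * x)) +
          4 * (g x * Real.cos (2 * Real.pi * α * x)) +
          2 * (g x * Real.cos (2 * Real.pi * (2 * α) * x))) := by
        congr! 2 with x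
        rw [show 2 * Real.pi * (2 * α) * x = 2 * (2 * Real.pi * α * x) by ring,
          Real.cos_two_mul, mul_zero, zero_mul, Real.cos_zero]
        ring
    _ = _ := by
        rw [integral_add hsum (hcos 2 _), integral_add (hcos 3 _) (hcos 4 _)]
        simp only [integral_const_mul, fourierT_re hg]

lemma neg_three_quarters_le_fourierT_re (hg : memA1 g) {α : ℝ} (hα : 1 / 2 ≤ α) :
    -(3 / 4) * (fourierT g 0).re ≤ (fourierT g α).re := by
  obtain ⟨-, -, hg_nonneg, hg_int, hg_neg⟩ := hg
  have h2α : (fourierT g (2 * α)).re ≤ 0 := hg_neg _ (by rw [abs_of_nonneg] <;> linarith)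
  linarith [fourierT_re_double_angle_nonneg hg_int hg_nonneg α]

/-- The bounds `ĝ ≥ -ĝ(0)` and, beyond `1/2`, `ĝ ≥ -(3/4) ĝ(0)` just suffice:
`1 - 1/4 - 9/16 - 3/16 = 0`. -/
lemma rho1star_nonneg (hg : memA1 g) : 0 ≤ rho1star g := by
  have hcont : Continuous fun α => (fourierT g α).re :=
    Complex.continuous_re.comp (continuous_fourierT hg.2.2.2.1)
  have hnear : -(fourierT g 0).re * ∫ α in (0 : ℝ)..(1 / 2), α ≤
      ∫ α in (0 : ℝ)..(1 / 2), (fourierT g α).re * α :=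
    const_mul_integral_le_integral_mul (by norm_num) hcont continuous_id
      (fun α _ => neg_fourierT_re_zero_le hg.2.2.2.1 hg.2.2.1 α) fun α hα => hα.1
  have hmiddle : -(3 / 4) * (fourierT g 0).re * ∫ α in (1 / 2 : ℝ)..1, α ≤
      ∫ α in (1 / 2 : ℝ)..1, (fourierT g α).re * α :=
    const_mul_integral_le_integral_mul (by norm_num) hcont continuous_id
      (fun α hα => neg_three_quarters_le_fourierT_re hg hα.1) fun α hα => by linarith [hα.1]
  have hfar : -(3 / 4) * (fourierT g 0).re * ∫ α in (1 : ℝ)..(3 / 2), (3 / 2 - α) ≤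
      ∫ α in (1 : ℝ)..(3 / 2), (fourierT g α).re * (3 / 2 - α) :=
    const_mul_integral_le_integral_mul (by norm_num) hcont (by fun_prop)
      (fun α hα => neg_three_quarters_le_fourierT_re hg (by linarith [hα.1]))
      fun α hα => by linarith [hα.2]
  rw [integral_id] at hnear hmiddle
  rw [intervalIntegral.integral_comp_sub_left fun x => x, integral_id] at hfar
  rw [rho1star_eq_intervalIntegral, ← intervalIntegral.integral_add_adjacent_intervals
    (Continuous.intervalIntegrable (by fun_prop) 0 (1 / 2))
    (Continuous.intervalIntegrable (by fun_prop) (1 / 2) 1)]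
  linarith

lemma C1star_le (hg : memA1 g) (hg0 : g ≠ 0) (hg_pos : 0 < g 0) : C1star ≤ rho1star g / g 0 := by
  refine csInf_le ⟨0, ?_⟩ ⟨g, hg, hg0, hg_pos, rfl⟩
  rintro _ ⟨h, hh, -, hh_pos, rfl⟩
  exact div_nonneg (rho1star_nonneg hh) hh_pos.le

end LowerBound

section Fejer

open scoped FourierTransform

/-- The hat function `max(0, 1 - |t|)`, the Fourier transform of `fejer`. -/
def hat (t : ℝ) : ℝ := max 0 (1 - |t|)

/-- The Fejér kernel `(sin πu / πu)²`, with value `1` at `u = 0`. -/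
def fejer (u : ℝ) : ℝ := Real.sinc (Real.pi * u) ^ 2

lemma continuous_hat : Continuous hat := by unfold hat; fun_prop

lemma hat_neg (t : ℝ) : hat (-t) = hat t := by rw [hat, hat, abs_neg]

lemma hat_of_one_le_abs {t : ℝ} (ht : 1 ≤ |t|) : hat t = 0 := max_eq_left (by linarith)

lemma hat_of_abs_le_one {t : ℝ} (ht : |t| ≤ 1) : hat t = 1 - |t| := max_eq_right (by linarith)

lemma integrable_hat : Integrable hat := by
  refine continuous_hat.integrable_of_hasCompactSupport <|
    HasCompactSupport.intro (isCompact_Icc (a := (-1 : ℝ)) (b := 1)) fun t ht => ?_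
  exact hat_of_one_le_abs (le_of_not_ge fun h => ht (abs_le.mp h))

lemma continuous_fejer : Continuous fejer := by unfold fejer; fun_prop

lemma fejer_nonneg (u : ℝ) : 0 ≤ fejer u := sq_nonneg _

lemma fejer_neg (u : ℝ) : fejer (-u) = fejer u := by rw [fejer, fejer, mul_neg, Real.sinc_neg]

lemma fejer_zero : fejer 0 = 1 := by rw [fejer, mul_zero, Real.sinc_zero, one_pow]

lemma fejer_of_ne_zero {u : ℝ} (hu : u ≠ 0) :
    fejer u = (1 - Real.cos (2 * Real.pi * u)) / (2 * (Real.pi * u) ^ 2) := by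
  rw [fejer, Real.sinc_of_ne_zero (mul_ne_zero Real.pi_ne_zero hu), div_pow, Real.sin_sq,
    Real.cos_sq, mul_assoc 2 Real.pi]
  field_simp
  ring

lemma sq_mul_fejer_le_one (u : ℝ) : u ^ 2 * fejer u ≤ 1 := by
  rcases eq_or_ne u 0 with rfl | hu
  · simp
  · have hπ : 1 ≤ Real.pi ^ 2 := one_le_pow₀ (by linarith [Real.pi_gt_three])
    calc u ^ 2 * fejer u = Real.sin (Real.pi * u) ^ 2 / Real.pi ^ 2 := by
          rw [fejer, Real.sinc_of_ne_zero (mul_ne_zero Real.pi_ne_zero hu)]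
          field_simp
      _ ≤ 1 := (div_le_one (by positivity)).mpr ((Real.sin_sq_le_one _).trans hπ)

lemma integrable_fejer : Integrable fejer := by
  refine (integrable_inv_one_add_sq.const_mul 2).mono' continuous_fejer.aestronglyMeasurable <|
    Eventually.of_forall fun u => ?_
  have hle_one : fejer u ≤ 1 := (sq_le_one_iff_abs_le_one _).mpr (Real.abs_sinc_le_one _)
  rw [Real.norm_of_nonneg (fejer_nonneg u), ← div_eq_mul_inv, le_div_iff₀ (by positivity)]
  linarith [sq_mul_fejer_le_one u]

lemma integral_one_sub_mul_cos {b : ℝ} (hb : b ≠ 0) :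
    ∫ v in (0 : ℝ)..1, (1 - v) * Real.cos (b * v) = (1 - Real.cos b) / b ^ 2 := by
  have hderiv (v : ℝ) : HasDerivAt
      (fun v => (1 - v) * Real.sin (b * v) / b - Real.cos (b * v) / b ^ 2)
      ((1 - v) * Real.cos (b * v)) v := by
    have hlin : HasDerivAt (fun v : ℝ => b * v) b v := by simpa using (hasDerivAt_id v).const_mul b
    refine (((((hasDerivAt_id v).const_sub 1).mul hlin.sin).div_const b).sub
      (hlin.cos.div_const (b ^ 2))).congr_deriv ?_
    simp only [id_eq]
    field_simp
    ring
  rw [intervalIntegral.integral_eq_sub_of_hasDerivAt (fun v _ => hderiv v)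
    (Continuous.intervalIntegrable (by fun_prop) _ _)]
  simp only [sub_self, zero_mul, zero_div, mul_one, mul_zero, Real.sin_zero, Real.cos_zero]
  ring

lemma integral_hat_mul_cos (b : ℝ) :
    ∫ v, hat v * Real.cos (b * v) = 2 * ∫ v in (0 : ℝ)..1, (1 - v) * Real.cos (b * v) := by
  calc ∫ v, hat v * Real.cos (b * v)
      = ∫ v in {v | 0 ≤ |v| ∧ |v| ≤ 1}, hat v * Real.cos (b * v) := by
        refine (setIntegral_eq_integral_of_forall_compl_eq_zero fun v hv => ?_).symm
        rw [hat_of_one_le_abs (le_of_not_ge fun h => hv ⟨abs_nonneg v, h⟩), zero_mul]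
    _ = ∫ v in {v | 0 ≤ |v| ∧ |v| ≤ 1}, (1 - |v|) * Real.cos (b * |v|) := by
        refine setIntegral_congr_fun (measurableSet_le_abs_le 0 1) fun v hv => ?_
        have hcos : Real.cos (b * |v|) = Real.cos (b * v) := by
          rcases abs_choice v with h | h <;> simp only [h, mul_neg, Real.cos_neg]
        simp only [hat_of_abs_le_one hv.2, hcos]
    _ = _ := setIntegral_comp_abs (fun v => (1 - v) * Real.cos (b * v)) le_rfl zero_le_one

lemma fourierT_hat : fourierT hat = fun u => (fejer u : ℂ) := by
  ext u
  rw [← ofReal_fourierT_re_of_even hat_neg, fourierT_re integrable_hat, integral_hat_mul_cos]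
  rcases eq_or_ne u 0 with rfl | hu
  · simp only [mul_zero, zero_mul, Real.cos_zero, mul_one, fejer_zero]
    rw [intervalIntegral.integral_comp_sub_left fun v => v, integral_id]
    norm_num
  · have hb : 2 * Real.pi * u ≠ 0 := mul_ne_zero Real.two_pi_pos.ne' hu
    rw [integral_one_sub_mul_cos hb, fejer_of_ne_zero hu]
    congr 1
    field_simp

lemma fourierT_fejer : fourierT fejer = fun t => (hat t : ℂ) := by
  have hinv := Continuous.fourierInv_fourier_eq (f := fun v => (hat v : ℂ))
    (Complex.continuous_ofReal.comp continuous_hat) integrable_hat.ofReal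
    (by rw [← fourierT_eq_fourier, fourierT_hat]; exact integrable_fejer.ofReal)
  ext t
  rw [fourierT_eq_fourier, ← fourierT_hat, ← hat_neg, ← congrFun hinv (-t),
    Real.fourierInv_eq_fourier_neg, neg_neg, ← fourierT_eq_fourier hat]

end Fejer

section Autocorrelation

/-- The autocorrelation `∑ a l * a (l + n)` of the finite sequence `a 0, …, a (N - 1)` at lag `n`;
it vanishes for `N ≤ n`. -/
def autocorr {R : Type*} [CommSemiring R] (a : ℕ → R) (N n : ℕ) : R :=
  ∑ l ∈ Finset.range (N - n), a l * a (l + n)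

/-- The piecewise linear function with nodes in `ℤ` that interpolates the autocorrelation of
`a 0, …, a (N - 1)`, extended evenly to negative lags. -/
def autocorrInterp (a : ℕ → ℝ) (N : ℕ) (u : ℝ) : ℝ :=
  ∑ p ∈ Finset.range N ×ˢ Finset.range N, a p.1 * a p.2 * hat (u - (p.1 - p.2))

lemma autocorr_of_le {R : Type*} [CommSemiring R] (a : ℕ → R) {N n : ℕ} (h : N ≤ n) :
    autocorr a N n = 0 := by
  rw [autocorr, Nat.sub_eq_zero_of_le h, Finset.sum_range_zero]

lemma autocorr_getD {R : Type*} [CommSemiring R] (l : List R) (n : ℕ) :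
    autocorr (fun i => l.getD i 0) l.length n = (List.zipWith (· * ·) l (l.drop n)).sum := by
  have hlen : l.length - n = (List.zipWith (· * ·) l (l.drop n)).length := by
    rw [List.length_zipWith, List.length_drop, min_eq_right (Nat.sub_le _ _)]
  rw [autocorr, hlen, Finset.sum_range, ← Fin.sum_univ_getElem]
  refine Finset.sum_congr rfl fun i _ => ?_
  have hi : i + n < l.length := by omega
  rw [List.getElem_zipWith, List.getElem_drop, List.getD_eq_getElem _ _ (by omega),
    List.getD_eq_getElem _ _ hi]
  simp only [add_comm]

lemma autocorr_intCast (a : ℕ → ℤ) (N n : ℕ) :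
    autocorr (fun i => (a i : ℝ)) N n = autocorr a N n := by
  simp only [autocorr, Int.cast_sum, Int.cast_mul]

lemma hat_intCast (k : ℤ) : hat k = if k = 0 then 1 else 0 := by
  split_ifs with hk
  · rw [hk, hat_of_abs_le_one] <;> simp
  · exact hat_of_one_le_abs (by exact_mod_cast Int.one_le_abs hk)

lemma hat_of_le_of_le_add_one (k : ℤ) {t : ℝ} (hk : k ≤ t) (hk' : t ≤ k + 1) :
    hat t = (k + 1 - t) * hat k + (t - k) * hat (k + 1) := by
  rw [show (k : ℝ) + 1 = ((k + 1 : ℤ) : ℝ) by push_cast; rfl, hat_intCast, hat_intCast]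
  rcases eq_or_ne k 0 with rfl | hk0
  · have ht : 0 ≤ t := by simpa using hk
    have ht' : t ≤ 1 := by simpa using hk'
    rw [hat_of_abs_le_one (abs_le.mpr ⟨by linarith, ht'⟩), abs_of_nonneg ht]
    norm_num
  rcases eq_or_ne k (-1) with rfl | hk1
  · have ht : -1 ≤ t := by simpa using hk
    have ht' : t ≤ 0 := by simpa using hk'
    rw [hat_of_abs_le_one (abs_le.mpr ⟨ht, by linarith⟩), abs_of_nonpos ht']
    norm_num [add_comm]
  rw [if_neg hk0, if_neg (by omega), hat_of_one_le_abs, mul_zero, mul_zero, add_zero]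
  rcases (by omega : k ≤ -2 ∨ 1 ≤ k) with h | h
  · have : (k : ℝ) ≤ -2 := by exact_mod_cast h
    exact le_abs.mpr (Or.inr (by linarith))
  · have : (1 : ℝ) ≤ k := by exact_mod_cast h
    exact le_abs.mpr (Or.inl (by linarith))

variable (a : ℕ → ℝ) (N : ℕ)

lemma continuous_autocorrInterp : Continuous (autocorrInterp a N) := by
  have := continuous_hat
  unfold autocorrInterp
  fun_prop

lemma autocorrInterp_natCast (n : ℕ) : autocorrInterp a N n = autocorr a N n := by
  have hnode (p : ℕ × ℕ) : hat ((n : ℝ) - (p.1 - p.2)) = if p.1 = p.2 + n then 1 else 0 := by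
    have h := hat_intCast (n - (p.1 - p.2))
    push_cast at h
    rw [h]
    congr 1
    grind
  have hrange : {l ∈ Finset.range N | l + n ∈ Finset.range N} = Finset.range (N - n) := by
    ext l
    simp only [Finset.mem_filter, Finset.mem_range]
    omega
  simp only [autocorrInterp, hnode, mul_ite, mul_one, mul_zero]
  rw [Finset.sum_product_right, autocorr, ← hrange, Finset.sum_filter]
  refine Finset.sum_congr rfl fun l _ => ?_
  simp only [Finset.sum_ite_eq', mul_comm (a l)]

lemma autocorrInterp_of_le_of_le_add_one {n : ℕ} {u : ℝ} (hu : n ≤ u) (hu' : u ≤ n + 1) :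
    autocorrInterp a N u = (n + 1 - u) * autocorr a N n + (u - n) * autocorr a N (n + 1) := by
  rw [← autocorrInterp_natCast, ← autocorrInterp_natCast, autocorrInterp, autocorrInterp,
    autocorrInterp, Finset.mul_sum, Finset.mul_sum, ← Finset.sum_add_distrib]
  refine Finset.sum_congr rfl fun p _ => ?_
  have h := hat_of_le_of_le_add_one (n - (p.1 - p.2)) (t := u - (p.1 - p.2))
    (by push_cast; linarith) (by push_cast; linarith)
  push_cast at h ⊢
  rw [h, show (n : ℝ) - (p.1 - p.2) + 1 = n + 1 - (p.1 - p.2) by ring]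
  ring

variable {a N} in
lemma autocorrInterp_nonpos {T : ℕ} (h : ∀ n, T ≤ n → autocorr a N n ≤ 0) {u : ℝ} (hu : T ≤ u) :
    autocorrInterp a N u ≤ 0 := by
  have hfloor : (⌊u⌋₊ : ℝ) ≤ u := Nat.floor_le ((Nat.cast_nonneg T).trans hu)
  have hT : T ≤ ⌊u⌋₊ := Nat.le_floor hu
  rw [autocorrInterp_of_le_of_le_add_one a N hfloor (Nat.lt_floor_add_one u).le]
  exact add_nonpos
    (mul_nonpos_of_nonneg_of_nonpos (sub_nonneg.mpr (Nat.lt_floor_add_one u).le) (h _ hT))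
    (mul_nonpos_of_nonneg_of_nonpos (sub_nonneg.mpr hfloor) (h _ (by omega)))

lemma integral_interp_mul_affine (x c d p q : ℝ) :
    ∫ u in x..(x + 1), ((x + 1 - u) * c + (u - x) * d) * (p + q * u) =
      (c * (3 * p + q * (3 * x + 1)) + d * (3 * p + q * (3 * x + 2))) / 6 := by
  have hderiv (u : ℝ) : HasDerivAt
      (fun u => ((x + 1) * c - x * d) * (p * u + q * (u ^ 2 / 2)) +
        (d - c) * (p * (u ^ 2 / 2) + q * (u ^ 3 / 3)))
      (((x + 1 - u) * c + (u - x) * d) * (p + q * u)) u := by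
    have h1 := hasDerivAt_id' u
    have h2 := (hasDerivAt_pow 2 u).div_const 2
    have h3 := (hasDerivAt_pow 3 u).div_const 3
    refine ((((h1.const_mul p).add (h2.const_mul q)).const_mul _).add
      (((h2.const_mul p).add (h3.const_mul q)).const_mul _)).congr_deriv ?_
    push_cast
    ring
  rw [intervalIntegral.integral_eq_sub_of_hasDerivAt (fun u _ => hderiv u)
    (Continuous.intervalIntegrable (by fun_prop) _ _)]
  ring

lemma integral_autocorrInterp_mul_affine {m k : ℕ} (hmk : m ≤ k) (p q : ℝ) :
    ∫ u in (m : ℝ)..k, autocorrInterp a N u * (p + q * u) =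
      ∑ n ∈ Finset.Ico m k, (autocorr a N n * (3 * p + q * (3 * n + 1)) +
        autocorr a N (n + 1) * (3 * p + q * (3 * n + 2))) / 6 := by
  have hcont := continuous_autocorrInterp a N
  rw [← intervalIntegral.sum_integral_adjacent_intervals_Ico (a := fun n : ℕ => (n : ℝ)) hmk
    fun _ _ => Continuous.intervalIntegrable (by fun_prop) _ _]
  refine Finset.sum_congr rfl fun n _ => ?_
  rw [← integral_interp_mul_affine, Nat.cast_succ]
  refine intervalIntegral.integral_congr fun u hu => ?_
  rw [Set.uIcc_of_le (by linarith)] at hu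
  simp only [autocorrInterp_of_le_of_le_add_one a N hu.1 hu.2]

end Autocorrelation

section TestFunction

/-- The test function `fejer (x / T) * |∑ a j e(jx / T)|²`, where `e(y) = exp(2πiy)` and the sum
is over `j < N`. -/
def testFun (T : ℝ) (a : ℕ → ℝ) (N : ℕ) (x : ℝ) : ℝ :=
  fejer (x / T) * ((∑ j ∈ Finset.range N, a j * Real.cos (2 * Real.pi * (j / T) * x)) ^ 2 +
    (∑ j ∈ Finset.range N, a j * Real.sin (2 * Real.pi * (j / T) * x)) ^ 2)

variable (T : ℝ) (a : ℕ → ℝ) (N : ℕ)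

lemma continuous_testFun : Continuous (testFun T a N) := by
  have := continuous_fejer
  unfold testFun
  fun_prop

lemma testFun_nonneg (x : ℝ) : 0 ≤ testFun T a N x :=
  mul_nonneg (fejer_nonneg _) (by positivity)

lemma testFun_neg (x : ℝ) : testFun T a N (-x) = testFun T a N x := by
  simp only [testFun, neg_div, fejer_neg, mul_neg, Real.cos_neg, Real.sin_neg,
    Finset.sum_neg_distrib, neg_sq]

lemma testFun_zero : testFun T a N 0 = (∑ j ∈ Finset.range N, a j) ^ 2 := by
  simp [testFun, fejer_zero]

lemma testFun_eq_sum (x : ℝ) :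
    testFun T a N x = ∑ p ∈ Finset.range N ×ˢ Finset.range N,
      a p.1 * a p.2 * (fejer (x / T) * Real.cos (2 * Real.pi * ((p.1 - p.2) / T) * x)) := by
  rw [testFun, sq, sq, Finset.sum_mul_sum, Finset.sum_mul_sum, ← Finset.sum_product',
    ← Finset.sum_product', ← Finset.sum_add_distrib, Finset.mul_sum]
  refine Finset.sum_congr rfl fun p _ => ?_
  rw [sub_div, mul_sub, sub_mul, Real.cos_sub]
  ring

variable {T}

lemma integrable_fejer_div_mul_cos (hT : 0 < T) (c : ℝ) :
    Integrable fun x => fejer (x / T) * Real.cos (c * x) :=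
  integrable_mul_cos (integrable_fejer.comp_div hT.ne') c

lemma integrable_testFun (hT : 0 < T) : Integrable (testFun T a N) := by
  rw [funext (testFun_eq_sum T a N)]
  exact integrable_finsetSum _ fun p _ => (integrable_fejer_div_mul_cos hT _).const_mul _

lemma fourierT_fejer_div_mul_cos (hT : 0 < T) (m α : ℝ) :
    (fourierT (fun x => fejer (x / T) * Real.cos (2 * Real.pi * (m / T) * x)) α).re =
      T / 2 * (hat (T * α - m) + hat (T * α + m)) := by
  rw [fourierT_re_mul_cos (integrable_fejer.comp_div hT.ne'), fourierT_comp_div _ hT,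
    fourierT_comp_div _ hT, fourierT_fejer, ← Complex.ofReal_mul, ← Complex.ofReal_mul,
    Complex.ofReal_re, Complex.ofReal_re, mul_sub, mul_add, mul_div_cancel₀ _ hT.ne']
  ring

lemma fourierT_testFun_re (hT : 0 < T) (α : ℝ) :
    (fourierT (testFun T a N) α).re = T * autocorrInterp a N (T * α) := by
  have hswap : autocorrInterp a N (T * α) = ∑ p ∈ Finset.range N ×ˢ Finset.range N,
      a p.1 * a p.2 * hat (T * α + (p.1 - p.2)) := by
    rw [autocorrInterp, Finset.sum_product, Finset.sum_product_right]
    refine Finset.sum_congr rfl fun j _ => Finset.sum_congr rfl fun l _ => ?_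
    rw [mul_comm (a j), sub_eq_add_neg (T * α), neg_sub]
  rw [funext (testFun_eq_sum T a N), fourierT_finset_sum_const_mul _ _
    fun p _ => integrable_fejer_div_mul_cos hT _]
  calc _ = T / 2 * (autocorrInterp a N (T * α) + autocorrInterp a N (T * α)) := by
        nth_rw 2 [hswap]
        rw [autocorrInterp, ← Finset.sum_add_distrib, Finset.mul_sum]
        refine Finset.sum_congr rfl fun p _ => ?_
        rw [fourierT_fejer_div_mul_cos hT]
        ring
    _ = _ := by ring

lemma memA1_testFun {T : ℕ} (hT : 0 < T) {a : ℕ → ℝ} {N : ℕ}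
    (h : ∀ n, T ≤ n → autocorr a N n ≤ 0) : memA1 (testFun T a N) := by
  have hT' : (0 : ℝ) < T := Nat.cast_pos.mpr hT
  refine ⟨continuous_testFun _ a N, testFun_neg _ a N, testFun_nonneg _ a N,
    integrable_testFun a N hT', fun α hα => ?_⟩
  rw [← fourierT_re_abs, fourierT_testFun_re a N hT']
  exact mul_nonpos_of_nonneg_of_nonpos hT'.le
    (autocorrInterp_nonpos h (le_mul_of_one_le_right hT'.le hα))

lemma integral_fourierT_testFun_mul_affine (hT : 0 < T) {m k : ℕ} (hmk : m ≤ k) (p q : ℝ) :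
    ∫ α in (m / T)..(k / T), (fourierT (testFun T a N) α).re * (p + q * α) =
      ∑ n ∈ Finset.Ico m k, (autocorr a N n * (3 * p + q / T * (3 * n + 1)) +
        autocorr a N (n + 1) * (3 * p + q / T * (3 * n + 2))) / 6 := by
  rw [← integral_autocorrInterp_mul_affine a N hmk]
  have hsubst := intervalIntegral.mul_integral_comp_mul_left (a := m / T) (b := k / T) T
    (f := fun u => autocorrInterp a N u * (p + q / T * u))
  rw [mul_div_cancel₀ _ hT.ne', mul_div_cancel₀ _ hT.ne'] at hsubst
  rw [← hsubst, ← intervalIntegral.integral_const_mul]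
  congr! 2
  rw [fourierT_testFun_re a N hT]
  field_simp

lemma rho1star_testFun {M : ℕ} (hM : 0 < M) :
    rho1star (testFun (2 * M) a N) = 2 * M * autocorr a N 0 +
      (∑ n ∈ Finset.range (2 * M),
        (autocorr a N n * (3 * n + 1) + autocorr a N (n + 1) * (3 * n + 2))) / (6 * M) +
      (∑ n ∈ Finset.Ico (2 * M) (3 * M), (autocorr a N n * (9 * M - (3 * n + 1)) +
        autocorr a N (n + 1) * (9 * M - (3 * n + 2)))) / (6 * M) := by
  have hM' : (0 : ℝ) < M := Nat.cast_pos.mpr hM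
  have hT : (0 : ℝ) < 2 * M := mul_pos two_pos hM'
  have hzero : autocorrInterp a N 0 = autocorr a N 0 := mod_cast autocorrInterp_natCast a N 0
  have hinner := integral_fourierT_testFun_mul_affine a N hT (Nat.zero_le (2 * M)) 0 1
  have houter := integral_fourierT_testFun_mul_affine a N hT (by omega : 2 * M ≤ 3 * M) (3 / 2) (-1)
  have hnodes : (3 * M : ℝ) / (2 * M) = 3 / 2 := by field_simp
  push_cast at hinner houter
  rw [zero_div, div_self hT.ne', Nat.Ico_zero_eq_range] at hinner
  rw [div_self hT.ne', hnodes] at houter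
  simp only [zero_add, one_mul, neg_one_mul, ← sub_eq_add_neg] at hinner houter
  rw [rho1star_eq_intervalIntegral, fourierT_testFun_re a N hT, mul_zero, hzero, hinner, houter,
    Finset.mul_sum, Finset.mul_sum, Finset.sum_div, Finset.sum_div]
  congr 1
  · congr 1
    refine Finset.sum_congr rfl fun n _ => ?_
    field_simp
    ring
  · refine Finset.sum_congr rfl fun n _ => ?_
    field_simp
    ring

end TestFunction

section Coefficients

/-- The coefficients of the trigonometric polynomial in `witness`, found numerically. -/
def coeffs : List ℤ := [
  142, 250, 368, 489, 609, 732, 868, 1012, 1166, 1331, 1511, 1684, 1860, 2044, 2236, 2445, 2628,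
  2807, 2981, 3154, 3326, 3499, 3647, 3790, 3921, 4040, 4156, 4269, 4386, 4499, 4601, 4684,
  4741, 4775, 4786, 4776, 4737, 4666, 4596, 4530, 4489, 4455, 4405, 4352, 4320, 4280, 4241,
  4204, 4169, 4130, 4089, 4046, 4003, 3961, 3928, 3899, 3867, 3830, 3791, 3757, 3609, 3474,
  3334, 3193, 3051, 2903, 2750, 2592, 2436, 2273, 2104, 1957, 1805, 1643, 1472, 1287, 1109, 930,
  750, 565, 380, 214, 34, -118, -247, -353, -451, -546, -633, -715, -781, -826, -841, -832,
  -804, -752, -677, -587, -471, -358, -293, -259, -222, -183, -154, -121, -90, -65, -44, -27,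
  -10, 12, 34, 55, 71, 78, 81, 81, 81, 72, 73, 67, 57, 45, 36, 41, 36, 38, 30, 14, -12, -68,
  -116, -146, -162, -165, -148, -117, -76, -27, 12, -6, 46, 77, 94, 99, 101, 103, 98, 93, 86,
  76, 61, 46, 32, 15, -3, -20, -57, -96, -105, -84, -55, -30, -28, -25, -20, -13, -2, 12, 23,
  26, 24, 18, 9, 3, 0, -5, -16, -40, -39, -33, -19, -5, 4, -3, 0, -5, -7, -5, 6, 32, 47, 51, 42,
  34, 16, -6, -29, -49, -53]

/-- The sequence `coeffs`, extended by zero. -/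
def coeff (i : ℕ) : ℤ := coeffs.getD i 0

lemma sum_coeff_pos : 0 < ∑ i ∈ Finset.range 201, coeff i := by decide +kernel

lemma autocorr_coeff : autocorr coeff 201 = fun n =>
    (List.zipWith (· * ·) coeffs (coeffs.drop n)).sum :=
  funext fun n => autocorr_getD coeffs n

lemma autocorr_coeff_nonpos (n : ℕ) (hn : 60 ≤ n) : autocorr coeff 201 n ≤ 0 := by
  rcases lt_or_ge n 201 with hn' | hn'
  · have h : ∀ n ∈ Finset.Ico 60 201, autocorr coeff 201 n ≤ 0 := by
      rw [autocorr_coeff]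
      decide +kernel
    exact h n (Finset.mem_Ico.mpr ⟨hn, hn'⟩)
  · exact (autocorr_of_le coeff hn').le

/-- The bound given by `rho1star_testFun` for `M = 30`, with denominators cleared. -/
lemma rho1star_coeff_lt :
    10000 * (10800 * autocorr coeff 201 0 +
      ∑ n ∈ Finset.range 60,
        (autocorr coeff 201 n * (3 * n + 1) + autocorr coeff 201 (n + 1) * (3 * n + 2)) +
      ∑ n ∈ Finset.Ico 60 90, (autocorr coeff 201 n * (270 - (3 * n + 1)) +
        autocorr coeff 201 (n + 1) * (270 - (3 * n + 2)))) <
    13155 * 180 * (∑ i ∈ Finset.range 201, coeff i) ^ 2 := by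
  rw [autocorr_coeff]
  decide +kernel

/-- A member of `A₁` with `ρ₁*(g) / g(0) ≈ 1.31549938`. -/
def witness : ℝ → ℝ := testFun 60 (fun i => coeff i) 201

lemma witness_zero : witness 0 = (∑ i ∈ Finset.range 201, (coeff i : ℝ)) ^ 2 :=
  testFun_zero _ _ _

lemma witness_zero_pos : 0 < witness 0 := by
  have hsum : (0 : ℝ) < (∑ i ∈ Finset.range 201, coeff i : ℤ) := Int.cast_pos.mpr sum_coeff_pos
  rw [witness_zero]
  exact_mod_cast pow_pos hsum 2

lemma memA1_witness : memA1 witness :=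
  memA1_testFun (T := 60) (by norm_num) fun n hn => by
    rw [autocorr_intCast]
    exact mod_cast autocorr_coeff_nonpos n hn

lemma rho1star_witness_lt : rho1star witness < 1.3155 * witness 0 := by
  have hT : (2 : ℝ) * (30 : ℕ) = 60 := by norm_num
  have hrho := rho1star_testFun (fun i => (coeff i : ℝ)) 201 (M := 30) (by norm_num)
  have hlt := (Int.cast_lt (R := ℝ)).mpr rho1star_coeff_lt
  simp only [hT, autocorr_intCast] at hrho
  push_cast at hrho hlt
  rw [witness_zero, witness, hrho]
  linarith

end Coefficients

/-- `C₁* < 1.3155`: there exists a nonzero `g ∈ A₁` with `g(0) > 0` and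
`ρ₁*(g)/g(0) < 1.3155`. -/
theorem statement17 :
    C1star < 1.3155 ∧
      ∃ g : ℝ → ℝ, memA1 g ∧ g ≠ 0 ∧ 0 < g 0 ∧ rho1star g / g 0 < 1.3155 := by
  have hne : witness ≠ 0 := fun h => witness_zero_pos.ne' (congrFun h 0)
  have hratio : rho1star witness / witness 0 < 1.3155 :=
    (div_lt_iff₀ witness_zero_pos).mpr rho1star_witness_lt
  exact ⟨(C1star_le memA1_witness hne witness_zero_pos).trans_lt hratio,
    witness, memA1_witness, hne, witness_zero_pos, hratio⟩

end
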